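/- For all 0 ≤ i, j ≤ N, the (2,1) entry of the block M̃^{i,j} = ∫_{-1}^{α} P_i(x) W_{p,n}(x) P_j(x)^T dx equals (1-α²)^{n/2} · p(n-p) / ((n+1)²(p+j)(n-p+i)) · C_i^{(n+1)/2}(α) · C_j^{(n+1)/2}(α). -/

import Mathlib

open Matrix

/-- Pochhammer symbol `(a)_k = a (a+1) ⋯ (a+k-1)`. -/
noncomputable def poch (a : ℝ) (k : ℕ) : ℝ := ∏ i ∈ Finset.range k, (a + i)

/-- Gegenbauer polynomial `C_w^λ(x)`, with the convention `C_w^λ = 0` for `w < 0`. -/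
noncomputable def geg (l : ℝ) (w : ℤ) (x : ℝ) : ℝ :=
  if w < 0 then 0 else
    poch (2 * l) w.toNat / (w.toNat.factorial : ℝ) *
      ∑ k ∈ Finset.range (w.toNat + 1),
        (poch (-(w.toNat : ℝ)) k * poch ((w.toNat : ℝ) + 2 * l) k) /
            (poch (l + 1 / 2) k * (k.factorial : ℝ)) * ((1 - x) / 2) ^ k

/-- The weight matrix `W_{p,n}(x)`. -/
noncomputable def Wmat (n : ℕ) (p : ℝ) (x : ℝ) : Matrix (Fin 2) (Fin 2) ℝ :=
  (1 - x ^ 2) ^ ((n : ℝ) / 2 - 1) •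
    !![p * x ^ 2 + (n : ℝ) - p, -(n : ℝ) * x; -(n : ℝ) * x, ((n : ℝ) - p) * x ^ 2 + p]

/-- The matrix valued polynomial `P_w`. -/
noncomputable def Pmat (n : ℕ) (p : ℝ) (w : ℕ) (x : ℝ) : Matrix (Fin 2) (Fin 2) ℝ :=
  !![1 / ((n : ℝ) + 1) * geg (((n : ℝ) + 1) / 2) (w : ℤ) x +
        1 / (p + w) * geg (((n : ℝ) + 3) / 2) ((w : ℤ) - 2) x,
      1 / (p + w) * geg (((n : ℝ) + 3) / 2) ((w : ℤ) - 1) x;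
      1 / ((n : ℝ) - p + w) * geg (((n : ℝ) + 3) / 2) ((w : ℤ) - 1) x,
      1 / ((n : ℝ) + 1) * geg (((n : ℝ) + 1) / 2) (w : ℤ) x +
        1 / ((n : ℝ) - p + w) * geg (((n : ℝ) + 3) / 2) ((w : ℤ) - 2) x]

/-!
The derivative rule `d/dx C_w^λ = 2λ C_{w-1}^{λ+1}` and the recurrence
`2λ (x C_{w-1}^{λ+1} - C_{w-2}^{λ+1}) = w C_w^λ` turn the first row of `P_j` and the second row of
`P_i` into expressions in `C_j`, `C_j'` and `C_i`, `C_i'`, where `C_w = C_w^{(n+1)/2}`. Expanding the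
matrix product then gives, up to a constant,
`(1-x²)^{n/2-1} ((1-x²) (C_i C_j)' - n x C_i C_j)`, which is the derivative of
`(1-x²)^{n/2} C_i C_j`; the latter vanishes at `-1`.
-/

open Polynomial Set
open scoped Nat

lemma poch_eq_ascPochhammer_eval (a : ℝ) (k : ℕ) : poch a k = (ascPochhammer ℝ k).eval a := by
  induction k with
  | zero => simp [poch]
  | succ k ih => rw [ascPochhammer_succ_eval, ← ih, poch, poch, Finset.prod_range_succ]

lemma poch_succ (a : ℝ) (k : ℕ) : poch a (k + 1) = poch a k * (a + k) :=
  Finset.prod_range_succ _ _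

lemma poch_succ_left (a : ℝ) (k : ℕ) : poch a (k + 1) = a * poch (a + 1) k := by
  simp [poch_eq_ascPochhammer_eval, ascPochhammer_succ_left]

lemma poch_add (a : ℝ) (m k : ℕ) : poch a (m + k) = poch a m * poch (a + m) k := by
  simp [poch_eq_ascPochhammer_eval, ← ascPochhammer_mul]

lemma poch_pos {a : ℝ} (ha : 0 < a) (k : ℕ) : 0 < poch a k :=
  Finset.prod_pos fun _ _ ↦ by positivity

lemma poch_neg_natCast (w k : ℕ) : poch (-(w : ℝ)) k = (-1) ^ k * (k ! * w.choose k) := by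
  rw [poch_eq_ascPochhammer_eval, ascPochhammer_eval_neg_eq_descPochhammer,
    descPochhammer_eval_eq_descFactorial, Nat.descFactorial_eq_factorial_mul_choose, Nat.cast_mul]

lemma cast_add_one_mul_choose {R : Type*} [Semiring R] (n k : ℕ) :
    ((n : R) + 1) * n.choose k = (n + 1).choose (k + 1) * (k + 1) := by
  exact_mod_cast congrArg (Nat.cast : ℕ → R) (Nat.add_one_mul_choose_eq n k)

lemma cast_choose_succ_mul {R : Type*} [CommRing R] (n k : ℕ) :
    (n.choose (k + 1) : R) * (k + 1) = n.choose k * (n - k) := by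
  have pascal : ((n + 1).choose (k + 1) : R) = n.choose k + n.choose (k + 1) := by
    rw [Nat.choose_succ_succ, Nat.cast_add]
  linear_combination -(k + 1) * pascal - cast_add_one_mul_choose (R := R) n k

lemma coeff_X_mul_derivative {R : Type*} [Semiring R] (P : R[X]) (k : ℕ) :
    (X * derivative P).coeff k = k * P.coeff k := by
  cases k with
  | zero => simp
  | succ k => rw [coeff_X_mul, coeff_derivative, Nat.cast_comm, Nat.cast_succ]

/-- The coefficient of `((1 - x) / 2) ^ k` in the Gegenbauer polynomial `C_w^l(x)`. The factor
`(-w)_k / k!` of the hypergeometric series is written as `(-1)^k` times a binomial coefficient, so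
that the coefficient visibly vanishes for `k > w`. -/
noncomputable def gegCoeff (l : ℝ) (w k : ℕ) : ℝ :=
  (-1) ^ k * w.choose k * poch (2 * l) (w + k) / (w ! * poch (l + 1 / 2) k)

/-- The Gegenbauer polynomial `C_w^l(x)` as a polynomial in the variable `(1 - x) / 2`. -/
noncomputable def gegPoly (l : ℝ) (w : ℕ) : ℝ[X] :=
  ∑ k ∈ Finset.range (w + 1), monomial k (gegCoeff l w k)

lemma coeff_gegPoly (l : ℝ) (w k : ℕ) : (gegPoly l w).coeff k = gegCoeff l w k := by
  have vanish (h : w < k) : gegCoeff l w k = 0 := by simp [gegCoeff, Nat.choose_eq_zero_of_lt h]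
  simpa [gegPoly, finsetSum_coeff, coeff_monomial, Nat.lt_succ_iff, eq_comm] using vanish

lemma geg_natCast (l : ℝ) (w : ℕ) (x : ℝ) : geg l w x = (gegPoly l w).eval ((1 - x) / 2) := by
  rw [geg, if_neg (by simp), Int.toNat_natCast, gegPoly, eval_finsetSum, Finset.mul_sum]
  refine Finset.sum_congr rfl fun k _ ↦ ?_
  rw [eval_monomial, gegCoeff, poch_neg_natCast, poch_add, add_comm (w : ℝ)]
  field_simp

lemma geg_of_neg {w : ℤ} (hw : w < 0) (l x : ℝ) : geg l w x = 0 :=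
  if_pos hw

lemma geg_zero (l x : ℝ) : geg l 0 x = 1 := by
  simp [geg, poch]

lemma derivative_gegPoly_succ {l : ℝ} (hl : -1 / 2 < l) (m : ℕ) :
    derivative (gegPoly l (m + 1)) = C (-4 * l) * gegPoly (l + 1) m := by
  ext k
  have absorb := cast_add_one_mul_choose (R := ℝ) m k
  have hl' : l + 1 / 2 ≠ 0 := by linarith
  have hk : poch (l + 1 + 1 / 2) k ≠ 0 := (poch_pos (by linarith) k).ne'
  rw [coeff_derivative, coeff_C_mul, coeff_gegPoly, coeff_gegPoly, gegCoeff, gegCoeff,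
    show m + 1 + (k + 1) = m + k + 1 + 1 by ring, poch_succ_left (2 * l),
    poch_succ_left (2 * l + 1), poch_succ_left (l + 1 / 2), Nat.factorial_succ,
    show 2 * l + 1 + 1 = 2 * (l + 1) by ring, show l + 1 / 2 + 1 = l + 1 + 1 / 2 by ring,
    show 2 * l + 1 = 2 * (l + 1 / 2) by ring]
  generalize poch (l + 1 + 1 / 2) k = D at *
  generalize l + 1 / 2 = c at *
  push_cast
  field_simp
  linear_combination 4 * l * poch (2 * (l + 1)) (m + k) * (-1) ^ k * absorb

-- Substituting `X = (1 - x) / 2`, this is `x C_{m+1}' - C_m' = (m + 1) C_{m+1}`.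
lemma gegPoly_succ_recurrence {l : ℝ} (hl : -1 / 2 < l) (m : ℕ) :
    (2 * X - 1) * derivative (gegPoly l (m + 1)) + derivative (gegPoly l m) =
      C (2 * (m + 1 : ℝ)) * gegPoly l (m + 1) := by
  ext k
  have absorb := cast_add_one_mul_choose (R := ℝ) m k
  have choose_m := cast_choose_succ_mul (R := ℝ) m k
  have choose_succ := cast_choose_succ_mul (R := ℝ) (m + 1) k
  have hlk : l + 1 / 2 + k ≠ 0 := by linarith [k.cast_nonneg (α := ℝ)]
  have hk : poch (l + 1 / 2) k ≠ 0 := (poch_pos (by linarith) k).ne'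
  rw [sub_one_mul, mul_assoc, coeff_add, coeff_sub, coeff_ofNat_mul, coeff_X_mul_derivative,
    coeff_C_mul, coeff_derivative, coeff_derivative, coeff_gegPoly, coeff_gegPoly, coeff_gegPoly,
    gegCoeff, gegCoeff, gegCoeff, show m + 1 + (k + 1) = m + 1 + k + 1 by ring,
    show m + (k + 1) = m + 1 + k by ring, poch_succ (2 * l), poch_succ (l + 1 / 2),
    Nat.factorial_succ]
  push_cast at *
  rw [show 2 * l + ((m : ℝ) + 1 + k) = 2 * (l + 1 / 2 + k) + (m - k) by ring]
  generalize poch (l + 1 / 2) k = D at *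
  generalize poch (2 * l) (m + 1 + k) = B
  generalize l + 1 / 2 + (k : ℝ) = e at *
  field_simp
  linear_combination
    (-1) ^ k * B * (2 * e * choose_succ - (m + 1) * choose_m - (m - k) * absorb)

lemma continuous_geg (l : ℝ) (w : ℤ) : Continuous (geg l w) := by
  rcases lt_or_ge w 0 with hw | hw
  · simpa only [funext (geg_of_neg hw l)] using continuous_const
  · lift w to ℕ using hw
    simp only [funext (geg_natCast l w)]
    fun_prop

lemma hasDerivAt_geg_natCast (l : ℝ) (w : ℕ) (x : ℝ) :
    HasDerivAt (geg l w) (-(derivative (gegPoly l w)).eval ((1 - x) / 2) / 2) x := by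
  have inner : HasDerivAt (fun x : ℝ ↦ (1 - x) / 2) (-1 / 2) x :=
    ((hasDerivAt_id x).const_sub 1).div_const 2
  rw [funext (geg_natCast l w)]
  exact (((gegPoly l w).hasDerivAt _).comp x inner).congr_deriv (by ring)

lemma hasDerivAt_geg {l : ℝ} (hl : -1 / 2 < l) (w : ℤ) (x : ℝ) :
    HasDerivAt (geg l w) (2 * l * geg (l + 1) (w - 1) x) x := by
  rcases lt_trichotomy w 0 with hw | rfl | hw
  · rw [funext (geg_of_neg hw l), geg_of_neg (by omega), mul_zero]
    exact hasDerivAt_const x 0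
  · rw [funext (geg_zero l), geg_of_neg (by omega), mul_zero]
    exact hasDerivAt_const x 1
  · obtain ⟨m, rfl⟩ : ∃ m : ℕ, w = (m + 1 : ℕ) := ⟨(w - 1).toNat, by omega⟩
    refine (hasDerivAt_geg_natCast l (m + 1) x).congr_deriv ?_
    rw [Nat.cast_succ, add_sub_cancel_right, geg_natCast, derivative_gegPoly_succ hl, eval_mul,
      eval_C]
    ring

lemma geg_recurrence {l : ℝ} (hl : -1 / 2 < l) (w : ℤ) (x : ℝ) :
    2 * l * (x * geg (l + 1) (w - 1) x - geg (l + 1) (w - 2) x) = w * geg l w x := by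
  rcases lt_trichotomy w 0 with hw | rfl | hw
  · simp [geg_of_neg hw, geg_of_neg (show w - 1 < 0 by omega), geg_of_neg (show w - 2 < 0 by omega)]
  · simp [geg_of_neg]
  · obtain ⟨m, rfl⟩ : ∃ m : ℕ, w = (m + 1 : ℕ) := ⟨(w - 1).toNat, by omega⟩
    have deriv_succ := (hasDerivAt_geg hl (m + 1 : ℕ) x).unique (hasDerivAt_geg_natCast l (m + 1) x)
    have deriv_m := (hasDerivAt_geg hl m x).unique (hasDerivAt_geg_natCast l m x)
    have recurrence := congrArg (eval ((1 - x) / 2)) (gegPoly_succ_recurrence hl m)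
    simp only [eval_add, eval_sub, eval_mul, eval_C, eval_X, eval_one, eval_ofNat,
      ← geg_natCast] at recurrence
    rw [show ((m + 1 : ℕ) : ℤ) - 2 = m - 1 by push_cast; ring]
    push_cast at *
    linear_combination x * deriv_succ - deriv_m + recurrence / 2

lemma intervalIntegrable_one_sub_sq_rpow {s : ℝ} (hs : -1 < s) :
    IntervalIntegrable (fun x : ℝ ↦ (1 - x ^ 2) ^ s) MeasureTheory.volume (-1) 1 := by
  have left : IntervalIntegrable (fun x : ℝ ↦ (1 - x ^ 2) ^ s) MeasureTheory.volume (-1) 0 := by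
    have endpoint : IntervalIntegrable (fun x : ℝ ↦ (x + 1) ^ s) MeasureTheory.volume (-1) 0 := by
      simpa using (intervalIntegral.intervalIntegrable_rpow' (a := 0) (b := 1) hs).comp_add_right 1
    have regular : ContinuousOn (fun x : ℝ ↦ (1 - x) ^ s) (uIcc (-1) 0) := by
      refine ContinuousOn.rpow_const (by fun_prop) fun x hx ↦ Or.inl ?_
      rw [uIcc_of_le (by norm_num)] at hx
      linarith [hx.2]
    refine (endpoint.mul_continuousOn regular).congr fun x hx ↦ ?_
    rw [uIoc_of_le (by norm_num)] at hx
    rw [← Real.mul_rpow (by linarith [hx.1]) (by linarith [hx.2])]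
    ring_nf
  have right : IntervalIntegrable (fun x : ℝ ↦ (1 - x ^ 2) ^ s) MeasureTheory.volume 0 1 := by
    simpa using ((IntervalIntegrable.iff_comp_neg).mp left).symm
  exact left.trans right

lemma hasDerivAt_one_sub_sq_rpow (s : ℝ) {x : ℝ} (hx : 1 - x ^ 2 ≠ 0) :
    HasDerivAt (fun x : ℝ ↦ (1 - x ^ 2) ^ s) (-(2 * s * x) * (1 - x ^ 2) ^ (s - 1)) x := by
  have hbase : HasDerivAt (fun x : ℝ ↦ 1 - x ^ 2) (-(2 * x)) x := by
    simpa using (hasDerivAt_pow 2 x).const_sub 1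
  exact (hbase.rpow_const (Or.inl hx)).congr_deriv (by ring)

lemma integral_one_sub_sq_rpow_mul {s α : ℝ} (hs : 0 < s) (hα : α ∈ Icc (-1) 1) {f f' : ℝ → ℝ}
    (hf : ContinuousOn f (Icc (-1) α)) (hff' : ∀ x ∈ Ioo (-1) α, HasDerivAt f (f' x) x)
    (hf' : ContinuousOn f' (Icc (-1) α)) :
    ∫ x in (-1)..α, (1 - x ^ 2) ^ (s - 1) * ((1 - x ^ 2) * f' x - 2 * s * x * f x) =
      (1 - α ^ 2) ^ s * f α := by
  have antideriv_continuous : ContinuousOn (fun x ↦ (1 - x ^ 2) ^ s * f x) (Icc (-1) α) :=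
    (ContinuousOn.rpow_const (by fun_prop) fun _ _ ↦ Or.inr hs.le).mul hf
  have antideriv_hasDerivAt (x : ℝ) (hx : x ∈ Ioo (-1) α) :
      HasDerivAt (fun x ↦ (1 - x ^ 2) ^ s * f x)
        ((1 - x ^ 2) ^ (s - 1) * ((1 - x ^ 2) * f' x - 2 * s * x * f x)) x := by
    have base_ne_zero : 1 - x ^ 2 ≠ 0 := by nlinarith [hx.1, hx.2, hα.2]
    have split : (1 - x ^ 2) ^ s = (1 - x ^ 2) ^ (s - 1) * (1 - x ^ 2) := by
      rw [← Real.rpow_add_one base_ne_zero, sub_add_cancel]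
    refine ((hasDerivAt_one_sub_sq_rpow s base_ne_zero).mul (hff' x hx)).congr_deriv ?_
    rw [split]
    ring
  have integrable : IntervalIntegrable
      (fun x ↦ (1 - x ^ 2) ^ (s - 1) * ((1 - x ^ 2) * f' x - 2 * s * x * f x))
      MeasureTheory.volume (-1) α := by
    refine IntervalIntegrable.mul_continuousOn ?_ ?_
    · refine (intervalIntegrable_one_sub_sq_rpow (by linarith)).mono_set ?_
      exact uIcc_subset_uIcc left_mem_uIcc (by rwa [uIcc_of_le (by norm_num)])
    · rw [uIcc_of_le hα.1]
      fun_prop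
  rw [intervalIntegral.integral_eq_sub_of_hasDerivAt_of_le hα.1 antideriv_continuous
    antideriv_hasDerivAt integrable]
  simp [Real.zero_rpow hs.ne']

lemma hasDerivAt_geg_add_one_div_two (n : ℕ) (w : ℤ) (x : ℝ) :
    HasDerivAt (geg ((n + 1) / 2) w) ((n + 1) * geg ((n + 3) / 2) (w - 1) x) x := by
  refine (hasDerivAt_geg (by linarith [n.cast_nonneg (α := ℝ)]) w x).congr_deriv ?_
  ring_nf

lemma Pmat_diagonal_eq (n w : ℕ) {q : ℝ} (hq : q + w ≠ 0) (x : ℝ) :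
    1 / ((n : ℝ) + 1) * geg ((n + 1) / 2) w x + 1 / (q + w) * geg ((n + 3) / 2) (w - 2) x =
      (x * geg ((n + 3) / 2) (w - 1) x + q / (n + 1) * geg ((n + 1) / 2) w x) / (q + w) := by
  have hn : (n : ℝ) + 1 ≠ 0 := n.cast_add_one_ne_zero
  have recurrence := geg_recurrence (l := (n + 1) / 2) (by linarith [n.cast_nonneg (α := ℝ)]) w x
  rw [show ((n : ℝ) + 1) / 2 + 1 = (n + 3) / 2 by ring, mul_div_cancel₀ _ two_ne_zero,
    Int.cast_natCast] at recurrence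
  field_simp
  linear_combination -recurrence

lemma Pmat_mul_Wmat_mul_transpose_apply_one_zero {n i j : ℕ} {p : ℝ} (hj : p + j ≠ 0)
    (hi : (n : ℝ) - p + i ≠ 0) (x : ℝ) :
    (Pmat n p i x * Wmat n p x * (Pmat n p j x)ᵀ) 1 0 =
      p * (n - p) / ((n + 1) ^ 2 * (p + j) * (n - p + i)) *
        ((1 - x ^ 2) ^ ((n : ℝ) / 2 - 1) *
          ((1 - x ^ 2) * ((n + 1) * geg ((n + 3) / 2) (i - 1) x * geg ((n + 1) / 2) j x +
              geg ((n + 1) / 2) i x * ((n + 1) * geg ((n + 3) / 2) (j - 1) x)) -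
            2 * (n / 2) * x * (geg ((n + 1) / 2) i x * geg ((n + 1) / 2) j x))) := by
  have hn : (n : ℝ) + 1 ≠ 0 := n.cast_add_one_ne_zero
  simp only [Pmat, Wmat, Pmat_diagonal_eq n i hi, Pmat_diagonal_eq n j hj, mul_apply,
    Fin.sum_univ_two, transpose_apply, Matrix.smul_apply, smul_eq_mul, of_apply, cons_val_zero,
    cons_val_one, cons_val', cons_val_fin_one]
  field_simp
  ring

theorem stmt_18_general (n : ℕ) (hn : 1 ≤ n) (p : ℝ) (i j : ℕ) (hj : p + j ≠ 0)
    (hi : (n : ℝ) - p + i ≠ 0) (α : ℝ) (hα : α ∈ Icc (-1) 1) :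
    (∫ x in (-1 : ℝ)..α, (Pmat n p i x * Wmat n p x * (Pmat n p j x)ᵀ) 1 0) =
      (1 - α ^ 2) ^ ((n : ℝ) / 2) * p * ((n : ℝ) - p) /
          (((n : ℝ) + 1) ^ 2 * (p + j) * ((n : ℝ) - p + i)) *
        geg (((n : ℝ) + 1) / 2) (i : ℤ) α * geg (((n : ℝ) + 1) / 2) (j : ℤ) α := by
  have hs : (0 : ℝ) < n / 2 := by positivity
  have hC (w : ℤ) : Continuous (geg ((n + 1) / 2) w) := continuous_geg _ w
  have hC' (w : ℤ) : Continuous (geg ((n + 3) / 2) w) := continuous_geg _ w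
  simp only [Pmat_mul_Wmat_mul_transpose_apply_one_zero hj hi]
  rw [intervalIntegral.integral_const_mul, integral_one_sub_sq_rpow_mul hs hα (by fun_prop)
    (fun x _ ↦ (hasDerivAt_geg_add_one_div_two n i x).fun_mul
      (hasDerivAt_geg_add_one_div_two n j x)) (by fun_prop)]
  ring

/-- The `(2,1)` entry of `M̃^{i,j} = ∫_{-1}^α P_i W_{p,n} P_j^T dx`. -/
theorem stmt_18 (n : ℕ) (hn : 1 ≤ n) (p : ℝ) (hp : 0 < p) (hpn : p < n)
    (N : ℕ) (α : ℝ) (hα : α ∈ Set.Ioo (-1 : ℝ) 1) :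
    ∀ i j : ℕ, i ≤ N → j ≤ N →
      (∫ x in (-1 : ℝ)..α, (Pmat n p i x * Wmat n p x * (Pmat n p j x)ᵀ) 1 0) =
        (1 - α ^ 2) ^ ((n : ℝ) / 2) * p * ((n : ℝ) - p) /
            (((n : ℝ) + 1) ^ 2 * (p + j) * ((n : ℝ) - p + i)) *
          geg (((n : ℝ) + 1) / 2) (i : ℤ) α * geg (((n : ℝ) + 1) / 2) (j : ℤ) α := by
  intro i j _ _
  have := sub_pos.mpr hpn
  exact stmt_18_general n hn p i j (by positivity) (by positivity) α (Ioo_subset_Icc_self hα)
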